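/- arXiv:2505.08021 — 2 statements merged into one kernel-verified Lean document; each statement's English description precedes it below -/
import Mathlib

section
/- Every GNN classifier in GNN_b^AC+ with L layers all of whose aggregation functions are k-bounded is invariant under ∼²_{L,k}, and every GNN classifier in GNN_s^AC+ with L layers is invariant under ∼²_{L,1}: if (G1,v1) ∼²_{L,k} (G2,v2) (resp. ∼²_{L,1}) for pointed graphs, then N(G1,v1) = N(G2,v2). -/
/-!
If Duplicator wins the `ℓ`-round game from a configuration, then every placed pebble pair sits on
two nodes carrying the same label after `ℓ` layers; this is proved by induction on `ℓ`
(`GNN.labelAt_eq_of_pebbleWin`), simultaneously for both pebble pairs. For the step, fix one pair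
on `(a₁, a₂)` and let Spoiler move the *other* pair. Given a label `x`, if Spoiler picks
`min k n` of the `n` neighbours of `a₁` with label `x`, the partial isomorphism condition and the
induction hypothesis force Duplicator's answer to consist of neighbours of `a₂` with label `x`
(`min_card_le_of_response`). By symmetry the multiplicity of `x` among the neighbours of `a₁` and
of `a₂` agrees up to the cap `k`, and likewise for non-neighbours, because equality with the fixed
pebble is preserved too. A `k`-bounded aggregation cannot distinguish such multisets
(`KBounded.map_eq`).
-/

attribute [local instance] Classical.propDecidable

noncomputable section

/-! ## Multisets with capped multiplicities, and bounded aggregation functions -/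

/-- The multiset obtained from `M` by replacing every multiplicity greater than `k` by `k`. -/
def Multiset.capAt {α : Type*} (k : ℕ) (M : Multiset α) : Multiset α :=
  haveI := Classical.decEq α
  M.toFinset.val.bind fun a => Multiset.replicate (min (M.count a) k) a

/-- A function on multisets is `k`-bounded if its value on any multiset agrees with its value
on the multiset with all multiplicities capped at `k`. -/
def KBounded {α β : Type*} (k : ℕ) (f : Multiset α → β) : Prop :=
  ∀ M : Multiset α, f M = f (M.capAt k)

/-- A function on multisets is bounded if it is `k`-bounded for some `k`;
it is set-based if it is `1`-bounded. -/
def BoundedAgg {α β : Type*} (f : Multiset α → β) : Prop :=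
  ∃ k : ℕ, KBounded k f

/-! ## Finite undirected simple node-labelled graphs -/

structure LGraph (d : ℕ) where
  n : ℕ
  adj : Fin n → Fin n → Prop
  symm : ∀ u v, adj u v → adj v u
  irrefl : ∀ v, ¬ adj v v
  label : Fin n → Fin d → Bool

/-- The neighbours of a node. -/
def LGraph.nbrs {d : ℕ} (G : LGraph d) (v : Fin G.n) : Finset (Fin G.n) :=
  Finset.univ.filter fun w => G.adj v w

/-- The non-neighbours of a node (excluding the node itself). -/
def LGraph.conbrs {d : ℕ} (G : LGraph d) (v : Fin G.n) : Finset (Fin G.n) :=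
  Finset.univ.filter fun w => ¬ G.adj v w ∧ w ≠ v

/-! ## GNN classifiers -/

/-- The kind of the layers of a GNN: aggregate-combine (`AC`),
aggregate-combine-readout (`ACR`), or extended aggregate-combine (`ACP`, i.e. `AC+`). -/
inductive GNNKind : Type
  | AC | ACR | ACP

/-- A GNN layer from dimension `din` to dimension `dout`: an aggregation function `agg`
(over neighbours), an auxiliary aggregation/readout function `aux` (fed the empty multiset in
`AC` layers, the multiset of all node labels in `ACR` layers, and the multiset of labels of
non-neighbours in `AC+` layers), and a combination function `comb`. -/
structure GNNLayer (din dout : ℕ) where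
  m₁ : ℕ
  m₂ : ℕ
  agg : Multiset (Fin din → ℝ) → Fin m₁ → ℝ
  aux : Multiset (Fin din → ℝ) → Fin m₂ → ℝ
  comb : (Fin din → ℝ) → (Fin m₁ → ℝ) → (Fin m₂ → ℝ) → Fin dout → ℝ

/-- A GNN classifier of dimension `d` with `L` layers of matching dimensions and a
classification function `cls`. -/
structure GNN (d : ℕ) where
  kind : GNNKind
  L : ℕ
  dims : ℕ → ℕ
  dims_zero : dims 0 = d
  layer : (ℓ : ℕ) → ℓ < L → GNNLayer (dims ℓ) (dims (ℓ + 1))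
  cls : (Fin (dims L) → ℝ) → Bool

/-- The set of nodes whose labels are fed to the second aggregation function `aux`. -/
def GNN.auxSet {d : ℕ} (N : GNN d) (G : LGraph d) (v : Fin G.n) : Finset (Fin G.n) :=
  match N.kind with
  | GNNKind.AC => ∅
  | GNNKind.ACR => Finset.univ
  | GNNKind.ACP => G.conbrs v

/-- The labelling of the nodes of `G` after `ℓ` layers of `N` have been applied. -/
def GNN.labelAt {d : ℕ} (N : GNN d) (G : LGraph d) : (ℓ : ℕ) → Fin G.n → Fin (N.dims ℓ) → ℝ
  | 0 => fun v i => if G.label v (Fin.cast N.dims_zero i) = true then 1 else 0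
  | ℓ + 1 => fun v =>
      if h : ℓ < N.L then
        (N.layer ℓ h).comb (N.labelAt G ℓ v)
          ((N.layer ℓ h).agg ((G.nbrs v).val.map fun w => N.labelAt G ℓ w))
          ((N.layer ℓ h).aux ((N.auxSet G v).val.map fun w => N.labelAt G ℓ w))
      else fun _ => 0

/-- The output of the GNN classifier `N` on the pointed graph `(G, v)`. -/
def GNN.eval {d : ℕ} (N : GNN d) (G : LGraph d) (v : Fin G.n) : Bool :=
  N.cls (N.labelAt G N.L v)

/-- The spectrum of `N` at layer `ℓ`: by convention, at layer `0` it is the set of Boolean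
vectors of the dimension of `N`; at layer `ℓ + 1` it is the set of vectors that can occur as
node labels upon application of layer `ℓ + 1` in applications of `N` to graphs. -/
def GNN.spec {d : ℕ} (N : GNN d) : (ℓ : ℕ) → Set (Fin (N.dims ℓ) → ℝ)
  | 0 => {x | ∀ i, x i = 0 ∨ x i = 1}
  | ℓ + 1 => {x | ∃ (G : LGraph d) (v : Fin G.n), N.labelAt G (ℓ + 1) v = x}

/-! ## Modal formulas (GMLC and its fragments GML, ML(E), ML) -/

inductive MForm (d : ℕ) : Type
  | prop : Fin d → MForm d
  | neg : MForm d → MForm d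
  | and : MForm d → MForm d → MForm d
  | dia : ℕ → MForm d → MForm d
  | glob : ℕ → MForm d → MForm d

namespace MForm

/-- Modal depth. -/
def depth {d : ℕ} : MForm d → ℕ
  | prop _ => 0
  | neg φ => depth φ
  | and φ ψ => max (depth φ) (depth ψ)
  | dia _ φ => depth φ + 1
  | glob _ φ => depth φ + 1

/-- Counting rank. -/
def rank {d : ℕ} : MForm d → ℕ
  | prop _ => 0
  | neg φ => rank φ
  | and φ ψ => max (rank φ) (rank ψ)
  | dia k φ => max k (rank φ)
  | glob k φ => max k (rank φ)

/-- Graded modal logic: no global modalities, grades are positive. -/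
def IsGML {d : ℕ} : MForm d → Prop
  | prop _ => True
  | neg φ => IsGML φ
  | and φ ψ => IsGML φ ∧ IsGML ψ
  | dia k φ => 1 ≤ k ∧ IsGML φ
  | glob _ _ => False

/-- Basic modal logic: no global modalities, all graded modalities are `◇₁`. -/
def IsML {d : ℕ} : MForm d → Prop
  | prop _ => True
  | neg φ => IsML φ
  | and φ ψ => IsML φ ∧ IsML ψ
  | dia k φ => k = 1 ∧ IsML φ
  | glob _ _ => False

/-- Graded modal logic with counting: grades are positive. -/
def IsGMLC {d : ℕ} : MForm d → Prop
  | prop _ => True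
  | neg φ => IsGMLC φ
  | and φ ψ => IsGMLC φ ∧ IsGMLC ψ
  | dia k φ => 1 ≤ k ∧ IsGMLC φ
  | glob k φ => 1 ≤ k ∧ IsGMLC φ

/-- Modal logic with the global modality: all modalities are `◇₁` or `∃₁`. -/
def IsMLE {d : ℕ} : MForm d → Prop
  | prop _ => True
  | neg φ => IsMLE φ
  | and φ ψ => IsMLE φ ∧ IsMLE ψ
  | dia k φ => k = 1 ∧ IsMLE φ
  | glob k φ => k = 1 ∧ IsMLE φ

/-- A tautology (needs a proposition to exist). -/
def top {d : ℕ} (hd : 0 < d) : MForm d :=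
  neg (and (prop ⟨0, hd⟩) (neg (prop ⟨0, hd⟩)))

/-- Conjunction of a list of formulas (the empty conjunction is a tautology). -/
def conjList {d : ℕ} (hd : 0 < d) : List (MForm d) → MForm d
  | [] => top hd
  | [φ] => φ
  | φ :: ψ :: rest => and φ (conjList hd (ψ :: rest))

end MForm

/-! ## Finite pointed Kripke models -/

structure KModel (d : ℕ) where
  W : Type
  fintype : Fintype W
  R : W → W → Prop
  symm : ∀ u v, R u v → R v u
  irrefl : ∀ v, ¬ R v v
  val : W → Fin d → Prop

/-- Satisfaction of modal formulas. -/
def KModel.sat {d : ℕ} (M : KModel d) : M.W → MForm d → Prop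
  | v, MForm.prop p => M.val v p
  | v, MForm.neg φ => ¬ M.sat v φ
  | v, MForm.and φ ψ => M.sat v φ ∧ M.sat v ψ
  | v, MForm.dia k φ => k ≤ Nat.card {w : M.W // M.R v w ∧ M.sat w φ}
  | v, MForm.glob k φ => k ≤ Nat.card {w : M.W // M.sat w φ}

/-- A list enumerating the worlds of a finite Kripke model. -/
def KModel.worldList {d : ℕ} (M : KModel d) : List M.W :=
  haveI := M.fintype
  Finset.univ.toList

/-- The Kripke model associated with a node-labelled graph. -/
def LGraph.toKModel {d : ℕ} (G : LGraph d) : KModel d where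
  W := Fin G.n
  fintype := inferInstance
  R := G.adj
  symm := G.symm
  irrefl := G.irrefl
  val := fun v p => G.label v p = true

/-! ## Graded bisimulation games -/

/-- `GBisim c ℓ M v M' v'` holds iff Duplicator has a winning strategy in the `ℓ`-round
`c`-graded bisimulation game starting from configuration `(M, v, M', v')`. -/
def GBisim {d : ℕ} (c : ℕ) : (ℓ : ℕ) → (M : KModel d) → M.W → (M' : KModel d) → M'.W → Prop
  | 0, M, v, M', v' => ∀ p, M.val v p ↔ M'.val v' p
  | ℓ + 1, M, v, M', v' =>
      (∀ p, M.val v p ↔ M'.val v' p) ∧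
      (∀ U₁ : Finset M.W, U₁.Nonempty → U₁.card ≤ c → (∀ u ∈ U₁, M.R v u) →
        ∃ U₂ : Finset M'.W, U₂.card = U₁.card ∧ (∀ u ∈ U₂, M'.R v' u) ∧
          ∀ u₂ ∈ U₂, ∃ u₁ ∈ U₁, GBisim c ℓ M u₁ M' u₂) ∧
      (∀ U₁ : Finset M'.W, U₁.Nonempty → U₁.card ≤ c → (∀ u ∈ U₁, M'.R v' u) →
        ∃ U₂ : Finset M.W, U₂.card = U₁.card ∧ (∀ u ∈ U₂, M.R v u) ∧
          ∀ u₂ ∈ U₂, ∃ u₁ ∈ U₁, GBisim c ℓ M u₂ M' u₁)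

/-- `GBisimG c ℓ M v M' v'` holds iff Duplicator has a winning strategy in the `ℓ`-round
`c`-graded *global* bisimulation game starting from configuration `(M, v, M', v')`:
Spoiler may additionally play global rounds, selecting worlds anywhere in one model. -/
def GBisimG {d : ℕ} (c : ℕ) : (ℓ : ℕ) → (M : KModel d) → M.W → (M' : KModel d) → M'.W → Prop
  | 0, M, v, M', v' => ∀ p, M.val v p ↔ M'.val v' p
  | ℓ + 1, M, v, M', v' =>
      (∀ p, M.val v p ↔ M'.val v' p) ∧
      (∀ U₁ : Finset M.W, U₁.Nonempty → U₁.card ≤ c → (∀ u ∈ U₁, M.R v u) →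
        ∃ U₂ : Finset M'.W, U₂.card = U₁.card ∧ (∀ u ∈ U₂, M'.R v' u) ∧
          ∀ u₂ ∈ U₂, ∃ u₁ ∈ U₁, GBisimG c ℓ M u₁ M' u₂) ∧
      (∀ U₁ : Finset M'.W, U₁.Nonempty → U₁.card ≤ c → (∀ u ∈ U₁, M'.R v' u) →
        ∃ U₂ : Finset M.W, U₂.card = U₁.card ∧ (∀ u ∈ U₂, M.R v u) ∧
          ∀ u₂ ∈ U₂, ∃ u₁ ∈ U₁, GBisimG c ℓ M u₂ M' u₁) ∧
      (∀ U₁ : Finset M.W, U₁.Nonempty → U₁.card ≤ c →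
        ∃ U₂ : Finset M'.W, U₂.card = U₁.card ∧
          ∀ u₂ ∈ U₂, ∃ u₁ ∈ U₁, GBisimG c ℓ M u₁ M' u₂) ∧
      (∀ U₁ : Finset M'.W, U₁.Nonempty → U₁.card ≤ c →
        ∃ U₂ : Finset M.W, U₂.card = U₁.card ∧
          ∀ u₂ ∈ U₂, ∃ u₁ ∈ U₁, GBisimG c ℓ M u₂ M' u₁)

/-! ## Characteristic formulas -/

/-- The conjunction of all propositions true at `v` and of the negations of all
propositions false at `v`. -/
def atomDesc {d : ℕ} (hd : 0 < d) (M : KModel d) (v : M.W) : MForm d :=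
  MForm.conjList hd ((List.finRange d).map fun p =>
    if M.val v p then MForm.prop p else MForm.neg (MForm.prop p))

/-- `|U^n_{v,w}|`: the number of neighbours `u` of `v` with `(M,u) ∼_{n,c} (M,w)`. -/
def USet {d : ℕ} (c n : ℕ) (M : KModel d) (v w : M.W) : ℕ :=
  Nat.card {u : M.W // M.R v u ∧ GBisim c n M u M w}

/-- The characteristic formula `φ^{ℓ,c}_{[M,v]}` of a finite pointed Kripke model for GML. -/
def charF {d : ℕ} (hd : 0 < d) (c : ℕ) (M : KModel d) : ℕ → M.W → MForm d
  | 0, v => atomDesc hd M v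
  | n + 1, v =>
      MForm.conjList hd
        ([atomDesc hd M v] ++
         ((M.worldList.filter fun w => decide (M.R v w)).flatMap fun w =>
            ((List.range c).map (· + 1)).filterMap fun k =>
              if k ≤ min (USet c n M v w) c then some (MForm.dia k (charF hd c M n w))
              else none) ++
         ((M.worldList.filter fun w => decide (M.R v w)).flatMap fun w =>
            ((List.range c).map (· + 1)).filterMap fun k =>
              if USet c n M v w < k ∧ k ≤ c then
                some (MForm.neg (MForm.dia k (charF hd c M n w)))
              else none) ++
         [MForm.neg (MForm.dia 1 (MForm.conjList hd
            ((M.worldList.filter fun w => decide (M.R v w)).map fun w =>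
              MForm.neg (charF hd c M n w))))])

/-- `|U^n_{v,w}|` for the global game. -/
def USetG {d : ℕ} (c n : ℕ) (M : KModel d) (v w : M.W) : ℕ :=
  Nat.card {u : M.W // M.R v u ∧ GBisimG c n M u M w}

/-- `|J^n_w|`: the number of worlds `u` with `(M,u) ∼^∃_{n,c} (M,w)`. -/
def JSetG {d : ℕ} (c n : ℕ) (M : KModel d) (w : M.W) : ℕ :=
  Nat.card {u : M.W // GBisimG c n M u M w}

/-- The global characteristic formula `φ^{ℓ,c}_{∃[M,v]}` for GMLC. -/
def charG {d : ℕ} (hd : 0 < d) (c : ℕ) (M : KModel d) : ℕ → M.W → MForm d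
  | 0, v => atomDesc hd M v
  | n + 1, v =>
      MForm.conjList hd
        ([atomDesc hd M v] ++
         ((M.worldList.filter fun w => decide (M.R v w)).flatMap fun w =>
            ((List.range c).map (· + 1)).filterMap fun k =>
              if k ≤ min (USetG c n M v w) c then some (MForm.dia k (charG hd c M n w))
              else none) ++
         ((M.worldList.filter fun w => decide (M.R v w)).flatMap fun w =>
            ((List.range c).map (· + 1)).filterMap fun k =>
              if USetG c n M v w < k ∧ k ≤ c then
                some (MForm.neg (MForm.dia k (charG hd c M n w)))
              else none) ++
         (M.worldList.flatMap fun w =>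
            ((List.range c).map (· + 1)).filterMap fun k =>
              if k ≤ min (JSetG c n M w) c then some (MForm.glob k (charG hd c M n w))
              else none) ++
         (M.worldList.flatMap fun w =>
            ((List.range c).map (· + 1)).filterMap fun k =>
              if JSetG c n M w < k ∧ k ≤ c then
                some (MForm.neg (MForm.glob k (charG hd c M n w)))
              else none) ++
         [MForm.neg (MForm.dia 1 (MForm.conjList hd
            ((M.worldList.filter fun w => decide (M.R v w)).map fun w =>
              MForm.neg (charG hd c M n w)))),
          MForm.neg (MForm.glob 1 (MForm.conjList hd
            (M.worldList.map fun w => MForm.neg (charG hd c M n w))))])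

/-! ## Two-variable first-order logic with counting quantifiers (C²) -/

/-- C² formulas over unary predicates `p₁, …, p_d` and one binary relation `E`, with the two
variables represented by `Bool` (`false` is the distinguished free variable `x`). -/
inductive C2Form (d : ℕ) : Type
  | prop : Fin d → Bool → C2Form d
  | edge : Bool → Bool → C2Form d
  | eq : Bool → Bool → C2Form d
  | neg : C2Form d → C2Form d
  | and : C2Form d → C2Form d → C2Form d
  | exC : ℕ → Bool → C2Form d → C2Form d

namespace C2Form

/-- Quantifier depth. -/
def depth {d : ℕ} : C2Form d → ℕ
  | prop _ _ => 0
  | edge _ _ => 0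
  | eq _ _ => 0
  | neg φ => depth φ
  | and φ ψ => max (depth φ) (depth ψ)
  | exC _ _ φ => depth φ + 1

/-- Counting rank. -/
def rank {d : ℕ} : C2Form d → ℕ
  | prop _ _ => 0
  | edge _ _ => 0
  | eq _ _ => 0
  | neg φ => rank φ
  | and φ ψ => max (rank φ) (rank ψ)
  | exC k _ φ => max k (rank φ)

/-- Well-formed C² formulas: all counting indices are positive. -/
def IsC2 {d : ℕ} : C2Form d → Prop
  | prop _ _ => True
  | edge _ _ => True
  | eq _ _ => True
  | neg φ => IsC2 φ
  | and φ ψ => IsC2 φ ∧ IsC2 ψ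
  | exC k _ φ => 1 ≤ k ∧ IsC2 φ

/-- FO² formulas: all counting quantifiers are with `k = 1`, i.e. ordinary `∃`. -/
def IsFO2 {d : ℕ} : C2Form d → Prop
  | prop _ _ => True
  | edge _ _ => True
  | eq _ _ => True
  | neg φ => IsFO2 φ
  | and φ ψ => IsFO2 φ ∧ IsFO2 ψ
  | exC k _ φ => k = 1 ∧ IsFO2 φ

/-- The set of free variables of a formula. -/
def free {d : ℕ} : C2Form d → Set Bool
  | prop _ b => {b}
  | edge b₁ b₂ => {b₁, b₂}
  | eq b₁ b₂ => {b₁, b₂}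
  | neg φ => free φ
  | and φ ψ => free φ ∪ free ψ
  | exC _ b φ => free φ \ {b}

end C2Form

/-- A finite first-order structure over the signature with unary predicates `p₁, …, p_d`
and one binary relation `E`. -/
structure FOModel (d : ℕ) where
  W : Type
  fintype : Fintype W
  E : W → W → Prop
  val : W → Fin d → Prop

/-- First-order satisfaction of C² formulas under an assignment of the two variables. -/
def FOModel.sat {d : ℕ} (M : FOModel d) : (Bool → M.W) → C2Form d → Prop
  | a, C2Form.prop p b => M.val (a b) p
  | a, C2Form.edge b₁ b₂ => M.E (a b₁) (a b₂)
  | a, C2Form.eq b₁ b₂ => a b₁ = a b₂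
  | a, C2Form.neg φ => ¬ M.sat a φ
  | a, C2Form.and φ ψ => M.sat a φ ∧ M.sat a ψ
  | a, C2Form.exC k b φ => k ≤ Nat.card {w : M.W // M.sat (Function.update a b w) φ}

/-- The first-order structure associated with a node-labelled graph. -/
def LGraph.toFOModel {d : ℕ} (G : LGraph d) : FOModel d where
  W := Fin G.n
  fintype := inferInstance
  E := G.adj
  val := fun v p => G.label v p = true

/-! ## Two-pebble graded games -/

/-- The positions of the pebbles (pair 1 placed, pair 2 possibly unplaced) form a partial
isomorphism between `M` and `M'`. -/
def PIso {d : ℕ} (M M' : FOModel d) (p₁ : M.W × M'.W) (p₂ : Option (M.W × M'.W)) : Prop :=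
  ((∀ q, M.val p₁.1 q ↔ M'.val p₁.2 q) ∧ (M.E p₁.1 p₁.1 ↔ M'.E p₁.2 p₁.2)) ∧
  ∀ x ∈ p₂,
    (∀ q, M.val x.1 q ↔ M'.val x.2 q) ∧ (M.E x.1 x.1 ↔ M'.E x.2 x.2) ∧
    (p₁.1 = x.1 ↔ p₁.2 = x.2) ∧
    (M.E p₁.1 x.1 ↔ M'.E p₁.2 x.2) ∧ (M.E x.1 p₁.1 ↔ M'.E x.2 p₁.2)

/-- Update the configuration by moving pebble pair `i` (`false` = pair 1, `true` = pair 2)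
to the given pair of worlds. -/
def updCfg {α β : Type*} (p₁ : α × β) (p₂ : Option (α × β)) :
    Bool → α × β → (α × β) × Option (α × β)
  | false, x => (x, p₂)
  | true, x => (p₁, some x)

/-- `PebbleWin c M M' ℓ p₁ p₂` holds iff Duplicator has a winning strategy in the 2-pebble
`ℓ`-round `c`-graded game from the configuration with pebble pair 1 on `p₁` and pebble pair 2
on `p₂` (if placed): she can ensure that the pebble positions always form a partial
isomorphism. -/
def PebbleWin {d : ℕ} (c : ℕ) (M M' : FOModel d) :
    (ℓ : ℕ) → M.W × M'.W → Option (M.W × M'.W) → Prop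
  | 0, p₁, p₂ => PIso M M' p₁ p₂
  | ℓ + 1, p₁, p₂ =>
      PIso M M' p₁ p₂ ∧
      ∀ i : Bool,
        (∀ U : Finset M.W, U.Nonempty → U.card ≤ c →
          ∃ U' : Finset M'.W, U'.card = U.card ∧
            ∀ u' ∈ U', ∃ u ∈ U,
              PebbleWin c M M' ℓ (updCfg p₁ p₂ i (u, u')).1 (updCfg p₁ p₂ i (u, u')).2) ∧
        (∀ U : Finset M'.W, U.Nonempty → U.card ≤ c →
          ∃ U' : Finset M.W, U'.card = U.card ∧
            ∀ u ∈ U', ∃ u' ∈ U,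
              PebbleWin c M M' ℓ (updCfg p₁ p₂ i (u, u')).1 (updCfg p₁ p₂ i (u, u')).2)

end

/-! ### Multisets with capped multiplicities -/

theorem Multiset.count_capAt {α : Type*} [DecidableEq α] (k : ℕ) (M : Multiset α) (a : α) :
    (M.capAt k).count a = min (M.count a) k := by
  have hdec : ‹DecidableEq α› = Classical.decEq α := Subsingleton.elim _ _
  subst hdec
  unfold Multiset.capAt
  rw [Multiset.count_bind]
  simp only [Multiset.count_replicate]
  change ∑ b ∈ M.toFinset, (if b = a then min (M.count b) k else 0) = _
  rw [Finset.sum_ite_eq']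
  split_ifs with h
  · rfl
  · rw [Multiset.mem_toFinset] at h
    simp [Multiset.count_eq_zero_of_notMem h]

/-- A `k`-bounded function takes the same value on the label multisets of two node sets in which
every label occurs equally often up to the cap `k`. -/
theorem KBounded.map_eq {α β ι κ : Type*} {k : ℕ} {f : Multiset α → β} (hf : KBounded k f)
    (A : Finset ι) (B : Finset κ) (g : ι → α) (h : κ → α)
    (hAB : ∀ x, min (A.filter fun i => g i = x).card k = min (B.filter fun j => h j = x).card k) :
    f (A.val.map g) = f (B.val.map h) := by
  rw [hf, hf (B.val.map h)]
  congr 1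
  ext x
  have hx := hAB x
  rw [Multiset.count_capAt, Multiset.count_capAt, Multiset.count_map, Multiset.count_map]
  simpa only [Finset.card_def, Finset.filter_val, eq_comm] using hx

/-! ### The pebble game -/

/-- If Duplicator can answer every set of size at most `c` through the relation `R`, and `R` maps
`A` into `B`, then `B` has at least as many elements as `A`, up to the cap `c`. -/
theorem min_card_le_of_response {α β : Type*} {c : ℕ} {R : α → β → Prop}
    (hR : ∀ U : Finset α, U.Nonempty → U.card ≤ c →
      ∃ U' : Finset β, U'.card = U.card ∧ ∀ u' ∈ U', ∃ u ∈ U, R u u')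
    (A : Finset α) (B : Finset β) (hAB : ∀ u u', R u u' → u ∈ A → u' ∈ B) :
    min A.card c ≤ B.card := by
  obtain ⟨U, hUA, hU⟩ := Finset.exists_subset_card_eq (min_le_left A.card c)
  rcases U.eq_empty_or_nonempty with rfl | hne
  · simp [← hU]
  · obtain ⟨U', hcard, hU'⟩ := hR U hne (hU ▸ min_le_right _ _)
    rw [← hU, ← hcard]
    refine Finset.card_le_card fun u' hu' => ?_
    obtain ⟨u, hu, huu'⟩ := hU' u' hu'
    exact hAB u u' huu' (hUA hu)

theorem PebbleWin.pIso {d c : ℕ} {M M' : FOModel d} {ℓ : ℕ} {p₁ : M.W × M'.W}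
    {p₂ : Option (M.W × M'.W)} (h : PebbleWin c M M' ℓ p₁ p₂) : PIso M M' p₁ p₂ := by
  cases ℓ with
  | zero => exact h
  | succ ℓ => exact h.1

/-- Winning a longer game implies winning a shorter one. -/
theorem PebbleWin.pred {d c : ℕ} {M M' : FOModel d} {ℓ : ℕ} {p₁ : M.W × M'.W}
    {p₂ : Option (M.W × M'.W)} (h : PebbleWin c M M' (ℓ + 1) p₁ p₂) :
    PebbleWin c M M' ℓ p₁ p₂ := by
  induction ℓ generalizing p₁ p₂ with
  | zero => exact h.1
  | succ ℓ ih =>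
    refine ⟨h.1, fun i => ⟨fun U hU hc => ?_, fun U hU hc => ?_⟩⟩
    · obtain ⟨U', hcard, hU'⟩ := (h.2 i).1 U hU hc
      refine ⟨U', hcard, fun u' hu' => ?_⟩
      obtain ⟨u, hu, hw⟩ := hU' u' hu'
      exact ⟨u, hu, ih hw⟩
    · obtain ⟨U', hcard, hU'⟩ := (h.2 i).2 U hU hc
      refine ⟨U', hcard, fun u hu => ?_⟩
      obtain ⟨u', hu', hw⟩ := hU' u hu
      exact ⟨u', hu', ih hw⟩

/-! ### Invariance of the node labels -/

/-- One layer preserves equality of labels at `(a₁, a₂)`, provided Duplicator can answer in both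
directions through a relation `R` that respects the labels so far, adjacency to the fixed nodes
`a₁`, `a₂`, and equality with them. -/
theorem GNN.labelAt_succ_eq {d k : ℕ} {N : GNN d} (hN : N.kind = GNNKind.ACP) {ℓ : ℕ}
    (hℓ : ℓ < N.L) (hagg : KBounded k (N.layer ℓ hℓ).agg) (haux : KBounded k (N.layer ℓ hℓ).aux)
    {G₁ G₂ : LGraph d} {a₁ : Fin G₁.n} {a₂ : Fin G₂.n} (R : Fin G₁.n → Fin G₂.n → Prop)
    (ha : N.labelAt G₁ ℓ a₁ = N.labelAt G₂ ℓ a₂)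
    (hR : ∀ u u', R u u' → N.labelAt G₁ ℓ u = N.labelAt G₂ ℓ u' ∧
      (G₁.adj a₁ u ↔ G₂.adj a₂ u') ∧ (u = a₁ ↔ u' = a₂))
    (h₁ : ∀ U : Finset (Fin G₁.n), U.Nonempty → U.card ≤ k →
      ∃ U' : Finset (Fin G₂.n), U'.card = U.card ∧ ∀ u' ∈ U', ∃ u ∈ U, R u u')
    (h₂ : ∀ U : Finset (Fin G₂.n), U.Nonempty → U.card ≤ k →
      ∃ U' : Finset (Fin G₁.n), U'.card = U.card ∧ ∀ u ∈ U', ∃ u' ∈ U, R u u') :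
    N.labelAt G₁ (ℓ + 1) a₁ = N.labelAt G₂ (ℓ + 1) a₂ := by
  -- Any pair of node sets respected by `R` has the same capped label counts.
  have key : ∀ (A : Finset (Fin G₁.n)) (B : Finset (Fin G₂.n)),
      (∀ u u', R u u' → (u ∈ A ↔ u' ∈ B)) → ∀ x,
      min (A.filter fun u => N.labelAt G₁ ℓ u = x).card k
        = min (B.filter fun u => N.labelAt G₂ ℓ u = x).card k := by
    intro A B hAB x
    have hmem : ∀ u u', R u u' → (u ∈ A.filter (fun u => N.labelAt G₁ ℓ u = x) ↔
        u' ∈ B.filter fun u => N.labelAt G₂ ℓ u = x) := by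
      intro u u' h
      simp only [Finset.mem_filter, hAB u u' h, (hR u u' h).1]
    have l₁ := min_card_le_of_response h₁ _ _ fun u u' h => (hmem u u' h).1
    have l₂ := min_card_le_of_response (R := fun u' u => R u u') h₂ _ _
      fun u' u h => (hmem u u' h).2
    omega
  simp only [GNN.labelAt, dif_pos hℓ, GNN.auxSet, hN]
  rw [ha]
  congr 1
  · have hset : ∀ u u', R u u' → (u ∈ G₁.nbrs a₁ ↔ u' ∈ G₂.nbrs a₂) := fun u u' h => by
      simp only [LGraph.nbrs, Finset.mem_filter, Finset.mem_univ, true_and, (hR u u' h).2.1]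
    refine hagg.map_eq _ _ _ _ fun x => ?_
    -- `convert` reconciles the two decidability instances for equality of labels.
    convert key _ _ hset x
  · have hset : ∀ u u', R u u' → (u ∈ G₁.conbrs a₁ ↔ u' ∈ G₂.conbrs a₂) := fun u u' h => by
      simp only [LGraph.conbrs, Finset.mem_filter, Finset.mem_univ, true_and, (hR u u' h).2.1,
        ne_eq, (hR u u' h).2.2]
    refine haux.map_eq _ _ _ _ fun x => ?_
    -- `convert` reconciles the two decidability instances for equality of labels.
    convert key _ _ hset x

theorem GNN.labelAt_zero_eq {d : ℕ} (N : GNN d) {G₁ G₂ : LGraph d} {a₁ : Fin G₁.n}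
    {a₂ : Fin G₂.n} (h : ∀ q, G₁.label a₁ q = true ↔ G₂.label a₂ q = true) :
    N.labelAt G₁ 0 a₁ = N.labelAt G₂ 0 a₂ := by
  funext i
  simp only [GNN.labelAt, h]

/-- Both pebble pairs sit on nodes with equal labels after `ℓ` layers whenever Duplicator wins the
`ℓ`-round game. Treating the two pairs together keeps the induction going: the step for one
pair moves the other one. -/
theorem GNN.labelAt_eq_of_pebbleWin {d k : ℕ} {N : GNN d} (hN : N.kind = GNNKind.ACP)
    (hk : ∀ (ℓ : ℕ) (h : ℓ < N.L),
      KBounded k (N.layer ℓ h).agg ∧ KBounded k (N.layer ℓ h).aux)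
    (G₁ G₂ : LGraph d) (ℓ : ℕ) (hℓ : ℓ ≤ N.L) (p₁ : Fin G₁.n × Fin G₂.n)
    (p₂ : Option (Fin G₁.n × Fin G₂.n))
    (h : PebbleWin k (LGraph.toFOModel G₁) (LGraph.toFOModel G₂) ℓ p₁ p₂) :
    N.labelAt G₁ ℓ p₁.1 = N.labelAt G₂ ℓ p₁.2 ∧
      ∀ x ∈ p₂, N.labelAt G₁ ℓ x.1 = N.labelAt G₂ ℓ x.2 := by
  induction ℓ generalizing p₁ p₂ with
  | zero =>
    have hp : PIso _ _ _ _ := h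
    exact ⟨N.labelAt_zero_eq hp.1.1, fun x hx => N.labelAt_zero_eq (hp.2 x hx).1⟩
  | succ ℓ ih =>
    have ih' := fun p₁ p₂ => ih (Nat.le_of_succ_le hℓ) p₁ p₂
    obtain ⟨hagg, haux⟩ := hk ℓ hℓ
    have hprev := ih' p₁ p₂ h.pred
    refine ⟨?_, ?_⟩
    · -- Spoiler moves pair 2 while pair 1 stays.
      refine GNN.labelAt_succ_eq hN hℓ hagg haux
        (fun u u' => PebbleWin k (LGraph.toFOModel G₁) (LGraph.toFOModel G₂) ℓ p₁ (some (u, u')))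
        hprev.1 (fun u u' hw => ?_) (h.2 true).1 (h.2 true).2
      have hiso := hw.pIso.2 (u, u') rfl
      exact ⟨(ih' _ _ hw).2 (u, u') rfl, hiso.2.2.2.1,
        eq_comm.trans (hiso.2.2.1.trans eq_comm)⟩
    · -- Spoiler moves pair 1 while pair 2 stays.
      intro x hx
      obtain rfl : p₂ = some x := hx
      refine GNN.labelAt_succ_eq hN hℓ hagg haux
        (fun u u' => PebbleWin k (LGraph.toFOModel G₁) (LGraph.toFOModel G₂) ℓ (u, u') (some x))
        (hprev.2 x rfl) (fun u u' hw => ?_) (h.2 false).1 (h.2 false).2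
      have hiso := hw.pIso.2 x rfl
      exact ⟨(ih' _ _ hw).1, hiso.2.2.2.2, hiso.2.2.1⟩

/-- Every GNN classifier in `GNN_b^AC+` with `L` layers all of whose
aggregation functions are `k`-bounded is invariant under `∼²_{L,k}`, and every GNN classifier
in `GNN_s^AC+` with `L` layers is invariant under `∼²_{L,1}`. -/
theorem gnn_acplus_invariant :
    ∀ (d : ℕ) (N : GNN d), N.kind = GNNKind.ACP →
      (∀ k : ℕ,
        (∀ (ℓ : ℕ) (h : ℓ < N.L),
          KBounded k (N.layer ℓ h).agg ∧ KBounded k (N.layer ℓ h).aux) →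
        ∀ (G₁ G₂ : LGraph d) (v₁ : Fin G₁.n) (v₂ : Fin G₂.n),
          PebbleWin k (LGraph.toFOModel G₁) (LGraph.toFOModel G₂) N.L (v₁, v₂) none →
          N.eval G₁ v₁ = N.eval G₂ v₂) ∧
      ((∀ (ℓ : ℕ) (h : ℓ < N.L),
          KBounded 1 (N.layer ℓ h).agg ∧ KBounded 1 (N.layer ℓ h).aux) →
        ∀ (G₁ G₂ : LGraph d) (v₁ : Fin G₁.n) (v₂ : Fin G₂.n),
          PebbleWin 1 (LGraph.toFOModel G₁) (LGraph.toFOModel G₂) N.L (v₁, v₂) none →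
          N.eval G₁ v₁ = N.eval G₂ v₂) := by
  intro d N hN
  have main : ∀ k : ℕ,
      (∀ (ℓ : ℕ) (h : ℓ < N.L),
        KBounded k (N.layer ℓ h).agg ∧ KBounded k (N.layer ℓ h).aux) →
      ∀ (G₁ G₂ : LGraph d) (v₁ : Fin G₁.n) (v₂ : Fin G₂.n),
        PebbleWin k (LGraph.toFOModel G₁) (LGraph.toFOModel G₂) N.L (v₁, v₂) none →
        N.eval G₁ v₁ = N.eval G₂ v₂ := fun k hk G₁ G₂ v₁ v₂ h =>
    congrArg N.cls (GNN.labelAt_eq_of_pebbleWin hN hk G₁ G₂ N.L le_rfl (v₁, v₂) none h).1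
  exact ⟨main, main 1⟩
end

section
/- Let N be a GNN classifier with L layers. If N ∈ GNN_b^AC+, then N is equivalent to a C2 classifier: there is a C2 formula φ(x) with one free variable such that for every pointed graph (G,v), N(G,v) = true iff M_G ⊨ φ(v). If N ∈ GNN_s^AC+, then N is equivalent to an FO2 classifier. Consequently, C2 ≡ GNN_b^AC+ and FO2 ≡ GNN_s^AC+. -/
/-!
Both directions rest on one observation: an AC+ layer sees, for a node `v`, exactly the three
ways in which a second node `w` can be related to `v`: equal, adjacent, or neither.

*From networks to formulas.* By induction on the layer, the label of a node depends only on the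
truth values of finitely many node properties definable in the logic
(`ACPlus.determined_labelAt`). Hence there are finitely many labels and "the label is `x`" is
definable; the `k`-capped multisets fed to the next layer are then described by the finitely many
thresholds `j ≤ #{w | w (non-)neighbour of v, label of w is x}` with `1 ≤ j ≤ k`, which are
expressible using counting indices up to `k` only. The set-based case is `k = 1`.

*From formulas to networks.* The canonical network `ACPlus.canonGNN` remembers in each layer the
old label and the two `k`-capped multisets of labels, through an injection into the reals, which
exists for cardinality reasons. By induction on a formula of depth at most `ℓ` and rank at most
`k`, its truth value depends only on the labels of the two nodes after `ℓ` layers and on the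
relation between them (`ACPlus.sat_iff_of_similar`): witnesses of a quantifier are counted
separately at the fixed node, among its neighbours and among its non-neighbours, and each count
up to `k` can be read off the capped multisets. With as many layers as the depth of the formula,
a suitable classification function therefore computes it.
-/

attribute [local instance] Classical.propDecidable

namespace ACPlus

/-! ### Capped multisets -/

theorem count_capAt {α : Type*} [DecidableEq α] (k : ℕ) (M : Multiset α) (a : α) :
    (M.capAt k).count a = min (M.count a) k := by
  have hd : (‹DecidableEq α› : DecidableEq α) = Classical.decEq α := Subsingleton.elim _ _
  subst hd
  unfold Multiset.capAt
  rw [Multiset.count_bind]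
  simp only [Multiset.count_replicate]
  change ∑ b ∈ M.toFinset, _ = _
  rw [Finset.sum_ite_eq' M.toFinset a]
  split_ifs with h
  · rfl
  · rw [Multiset.mem_toFinset] at h
    simp [Multiset.count_eq_zero_of_notMem h]

theorem capAt_capAt {α : Type*} (k : ℕ) (M : Multiset α) :
    (M.capAt k).capAt k = M.capAt k := by
  ext a
  simp [count_capAt]

theorem capAt_eq_of_thresholds {α : Type*} (k : ℕ) (M M' : Multiset α)
    (h : ∀ a j, 1 ≤ j → j ≤ k → (j ≤ M.count a ↔ j ≤ M'.count a)) :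
    M.capAt k = M'.capAt k := by
  ext a
  rw [count_capAt, count_capAt]
  by_contra hne
  rcases Nat.lt_or_gt_of_ne hne with hlt | hlt
  · have := h a (min (M'.count a) k) (by omega) (by omega)
    omega
  · have := h a (min (M.count a) k) (by omega) (by omega)
    omega

/-- Capping multiplicities at `k` does not change the number of elements with a given property,
as far as that number is below `k`. -/
theorem min_countP_capAt {α : Type*} (k : ℕ) (M : Multiset α) (P : α → Prop) :
    min ((M.capAt k).countP P) k = min (M.countP P) k := by
  have hle : M.capAt k ≤ M := by
    rw [Multiset.le_iff_count]
    intro a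
    rw [count_capAt]
    exact min_le_left _ _
  have h1 := Multiset.countP_le_of_le P hle
  by_cases hbig : ∃ a, P a ∧ k ≤ M.count a
  · obtain ⟨a, ha, hk⟩ := hbig
    have h2 : (M.capAt k).count a ≤ (M.capAt k).countP P := by
      rw [Multiset.count]
      rw [Multiset.countP_eq_card_filter, Multiset.countP_eq_card_filter]
      apply Multiset.card_le_card
      apply Multiset.monotone_filter_right
      intro b hb
      subst hb
      exact ha
    rw [count_capAt] at h2
    omega
  · push Not at hbig
    have : (M.capAt k).filter P = M.filter P := by
      ext a
      rw [Multiset.count_filter, Multiset.count_filter, count_capAt]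
      split_ifs with ha
      · have := hbig a ha
        omega
      · rfl
    rw [Multiset.countP_eq_card_filter, Multiset.countP_eq_card_filter, this]

/-! ### Definable node properties -/

/-- All counting indices occurring in the formula belong to `A`. -/
def Graded {d : ℕ} (A : ℕ → Prop) : C2Form d → Prop
  | .prop _ _ => True
  | .edge _ _ => True
  | .eq _ _ => True
  | .neg φ => Graded A φ
  | .and φ ψ => Graded A φ ∧ Graded A ψ
  | .exC k _ φ => A k ∧ Graded A φ

theorem isC2_of_graded {d : ℕ} (φ : C2Form d) (h : Graded (fun k => 1 ≤ k) φ) : φ.IsC2 := by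
  induction φ with
  | prop | edge | eq => trivial
  | neg φ ih => exact ih h
  | and φ ψ ih₁ ih₂ => exact ⟨ih₁ h.1, ih₂ h.2⟩
  | exC k b φ ih => exact ⟨h.1, ih h.2⟩

theorem isFO2_of_graded {d : ℕ} (φ : C2Form d) (h : Graded (fun k => k = 1) φ) : φ.IsFO2 := by
  induction φ with
  | prop | edge | eq => trivial
  | neg φ ih => exact ih h
  | and φ ψ ih₁ ih₂ => exact ⟨ih₁ h.1, ih₂ h.2⟩
  | exC k b φ ih => exact ⟨h.1, ih h.2⟩

/-- A property of pointed graphs. -/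
abbrev NodeProp (d : ℕ) : Type := ∀ G : LGraph d, Fin G.n → Prop

/-- A node property is definable with counting indices in `A` if, for either choice `b` of the
variable, it is expressed by a formula whose only free variable is `b`. Both variables are
requested so that the property can be used under a quantifier. -/
def Definable {d : ℕ} (A : ℕ → Prop) (P : NodeProp d) : Prop :=
  ∀ b : Bool, ∃ φ : C2Form d, Graded A φ ∧ φ.free ⊆ {b} ∧
    ∀ (G : LGraph d) (a : Bool → Fin G.n), G.toFOModel.sat a φ ↔ P G (a b)

variable {d : ℕ} {A : ℕ → Prop}

theorem Definable.congr {P Q : NodeProp d} (hP : Definable A P) (h : ∀ G v, P G v ↔ Q G v) :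
    Definable A Q := by
  have : P = Q := by
    funext G v
    exact propext (h G v)
  exact this ▸ hP

theorem definable_true : Definable A (fun (_ : LGraph d) _ => True) := fun b =>
  ⟨.eq b b, trivial, by simp [C2Form.free], fun _ _ => iff_of_true rfl trivial⟩

theorem definable_label (p : Fin d) :
    Definable A (fun (G : LGraph d) v => G.label v p = true) := fun b =>
  ⟨.prop p b, trivial, by simp [C2Form.free], fun G a => by
    simp [FOModel.sat, LGraph.toFOModel]⟩

theorem Definable.not {P : NodeProp d} (hP : Definable A P) :
    Definable A (fun G v => ¬ P G v) := fun b => by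
  obtain ⟨φ, h1, h2, h3⟩ := hP b
  exact ⟨.neg φ, h1, h2, fun G a => by simp [FOModel.sat, h3]⟩

theorem Definable.and {P Q : NodeProp d} (hP : Definable A P) (hQ : Definable A Q) :
    Definable A (fun G v => P G v ∧ Q G v) := fun b => by
  obtain ⟨φ, h1, h2, h3⟩ := hP b
  obtain ⟨ψ, k1, k2, k3⟩ := hQ b
  exact ⟨.and φ ψ, ⟨h1, k1⟩, Set.union_subset h2 k2, fun G a => by simp [FOModel.sat, h3, k3]⟩

theorem Definable.or {P Q : NodeProp d} (hP : Definable A P) (hQ : Definable A Q) :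
    Definable A (fun G v => P G v ∨ Q G v) :=
  (hP.not.and hQ.not).not.congr fun G v => by tauto

theorem Definable.threshold_nbrs {P : NodeProp d} (hP : Definable A P) {j : ℕ} (hj : A j) :
    Definable A (fun G v => j ≤ ((G.nbrs v).filter (P G)).card) := fun b => by
  obtain ⟨φ, h1, h2, h3⟩ := hP (!b)
  refine ⟨.exC j (!b) (.and (.edge b (!b)) φ), ⟨hj, trivial, h1⟩, ?_, fun G a => ?_⟩
  · intro c hc
    cases b <;> cases c <;> simp_all [C2Form.free]
  · have hne : b ≠ !b := by cases b <;> simp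
    have h4 : ∀ w : Fin G.n, G.toFOModel.sat (Function.update a (!b) w) φ ↔ P G w := fun w =>
      (h3 G (Function.update a (!b) w)).trans (by rw [Function.update_self])
    change j ≤ Nat.card {w : Fin G.n // G.adj (Function.update a (!b) w b)
      (Function.update a (!b) w !b) ∧ G.toFOModel.sat (Function.update a (!b) w) φ} ↔ _
    simp only [h4, Function.update_self, Function.update_of_ne hne]
    rw [Nat.card_eq_fintype_card, Fintype.card_subtype, LGraph.nbrs, Finset.filter_filter]

theorem Definable.threshold_conbrs {P : NodeProp d} (hP : Definable A P) {j : ℕ} (hj : A j) :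
    Definable A (fun G v => j ≤ ((G.conbrs v).filter (P G)).card) := fun b => by
  obtain ⟨φ, h1, h2, h3⟩ := hP (!b)
  refine ⟨.exC j (!b) (.and (.and (.neg (.edge b (!b))) (.neg (.eq (!b) b))) φ),
    ⟨hj, ⟨trivial, trivial⟩, h1⟩, ?_, fun G a => ?_⟩
  · intro c hc
    cases b <;> cases c <;> simp_all [C2Form.free]
  · have hne : b ≠ !b := by cases b <;> simp
    have h4 : ∀ w : Fin G.n, G.toFOModel.sat (Function.update a (!b) w) φ ↔ P G w := fun w =>
      (h3 G (Function.update a (!b) w)).trans (by rw [Function.update_self])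
    change j ≤ Nat.card {w : Fin G.n // (¬ G.adj (Function.update a (!b) w b)
      (Function.update a (!b) w !b) ∧
      ¬ Function.update a (!b) w (!b) = Function.update a (!b) w b) ∧
      G.toFOModel.sat (Function.update a (!b) w) φ} ↔ _
    simp only [h4, Function.update_self, Function.update_of_ne hne]
    rw [Nat.card_eq_fintype_card, Fintype.card_subtype, LGraph.conbrs, Finset.filter_filter]

/-! ### Functions determined by finitely many definable properties -/

/-- The pointed graphs `(G, v)` and `(G', v')` agree on all properties in `Φ`. -/
def AgreeOn (Φ : Set (NodeProp d)) (G : LGraph d) (v : Fin G.n) (G' : LGraph d)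
    (v' : Fin G'.n) : Prop :=
  ∀ P ∈ Φ, P G v ↔ P G' v'

/-- The value of `F` at a pointed graph depends only on the truth values of finitely many
definable properties. -/
def Determined (A : ℕ → Prop) {α : Type*} (F : ∀ G : LGraph d, Fin G.n → α) : Prop :=
  ∃ Φ : Set (NodeProp d), Φ.Finite ∧ (∀ P ∈ Φ, Definable A P) ∧
    ∀ G v G' v', AgreeOn Φ G v G' v' → F G v = F G' v'

/-- A property determined by finitely many definable properties is a Boolean combination of
them. The induction removes one property `Q` of `Φ` at a time, splitting on its truth value. -/
theorem definable_of_agree {Φ : Set (NodeProp d)} (hΦ : Φ.Finite) :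
    (∀ P ∈ Φ, Definable A P) → ∀ R : NodeProp d,
    (∀ G v G' v', AgreeOn Φ G v G' v' → R G v → R G' v') → Definable A R := by
  induction Φ, hΦ using Set.Finite.induction_on with
  | empty =>
    intro _ R hR
    by_cases h : ∃ G v, R G v
    · obtain ⟨G, v, hv⟩ := h
      exact definable_true.congr fun G' v' =>
        ⟨fun _ => hR G v G' v' (fun P hP => hP.elim) hv, fun _ => trivial⟩
    · exact definable_true.not.congr fun G' v' =>
        ⟨fun h' => (h' trivial).elim, fun h' => (h ⟨G', v', h'⟩).elim⟩
  | @insert Q Φ _ _ ih =>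
    intro hdef R hR
    have hQ : Definable A Q := hdef Q (Set.mem_insert _ _)
    have hdef' : ∀ P ∈ Φ, Definable A P := fun P hP => hdef P (Set.mem_insert_of_mem _ hP)
    -- The restriction of `R` to `Q = t`, made independent of `Q` by an existential.
    have key : ∀ t : Prop, Definable A (fun G v => ∃ (G' : LGraph d) (v' : Fin G'.n),
        AgreeOn Φ G v G' v' ∧ (Q G' v' ↔ t) ∧ R G' v') := by
      intro t
      apply ih hdef'
      rintro G v G₁ v₁ hagree ⟨G', v', h1, h2, h3⟩
      exact ⟨G', v', fun P hP => (hagree P hP).symm.trans (h1 P hP), h2, h3⟩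
    refine ((hQ.and (key True)).or (hQ.not.and (key False))).congr fun G v => ⟨?_, ?_⟩
    · rintro (⟨hq, G', v', h1, h2, h3⟩ | ⟨hq, G', v', h1, h2, h3⟩)
      all_goals
        refine hR G' v' G v ?_ h3
        rintro P (rfl | hP)
        · tauto
        · exact (h1 P hP).symm
    · intro hr
      by_cases hq : Q G v
      · exact Or.inl ⟨hq, G, v, fun P _ => Iff.rfl, by tauto, hr⟩
      · exact Or.inr ⟨hq, G, v, fun P _ => Iff.rfl, by tauto, hr⟩

theorem Determined.definable {α : Type*} {F : ∀ G : LGraph d, Fin G.n → α}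
    (hF : Determined A F) (S : α → Prop) : Definable A (fun G v => S (F G v)) := by
  obtain ⟨Φ, hfin, hdef, hdet⟩ := hF
  exact definable_of_agree hfin hdef _ fun G v G' v' h hs => hdet G v G' v' h ▸ hs

theorem Determined.finite_range {α : Type*} {F : ∀ G : LGraph d, Fin G.n → α}
    (hF : Determined A F) : {x | ∃ G v, F G v = x}.Finite := by
  obtain ⟨Φ, hfin, hdef, hdet⟩ := hF
  have := hfin.to_subtype
  -- A value of `F` is pinned down by the truth vector of any pointed graph realising it.
  have h : ∀ x : {x | ∃ G v, F G v = x}, ∃ τ : Φ → Prop, ∃ G v, F G v = x.1 ∧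
      ∀ P : Φ, τ P ↔ P.1 G v := by
    rintro ⟨x, G, v, hx⟩
    exact ⟨fun P => P.1 G v, G, v, hx, fun _ => Iff.rfl⟩
  choose τ hτ using h
  have hinj : Function.Injective τ := fun x y hxy => by
    obtain ⟨G, v, h1, h2⟩ := hτ x
    obtain ⟨G', v', h1', h2'⟩ := hτ y
    apply Subtype.ext
    rw [← h1, ← h1']
    apply hdet
    intro P hP
    exact (h2 ⟨P, hP⟩).symm.trans ((iff_of_eq (congrFun hxy _)).trans (h2' ⟨P, hP⟩))
  have := Finite.of_injective τ hinj
  exact Set.toFinite _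

theorem Determined.combine {α β γ δ : Type*} {F₁ : ∀ G : LGraph d, Fin G.n → α}
    {F₂ : ∀ G : LGraph d, Fin G.n → β} {F₃ : ∀ G : LGraph d, Fin G.n → γ}
    (h₁ : Determined A F₁) (h₂ : Determined A F₂) (h₃ : Determined A F₃) (g : α → β → γ → δ) :
    Determined A (fun G v => g (F₁ G v) (F₂ G v) (F₃ G v)) := by
  obtain ⟨Φ₁, f₁, d₁, e₁⟩ := h₁
  obtain ⟨Φ₂, f₂, d₂, e₂⟩ := h₂
  obtain ⟨Φ₃, f₃, d₃, e₃⟩ := h₃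
  refine ⟨Φ₁ ∪ Φ₂ ∪ Φ₃, (f₁.union f₂).union f₃, ?_, fun G v G' v' h => ?_⟩
  · rintro P ((h | h) | h)
    exacts [d₁ P h, d₂ P h, d₃ P h]
  · beta_reduce
    rw [e₁ G v G' v' fun P hP => h P (Or.inl (Or.inl hP)),
      e₂ G v G' v' fun P hP => h P (Or.inl (Or.inr hP)),
      e₃ G v G' v' fun P hP => h P (Or.inr hP)]

/-- If `F` is determined, so is the capped multiset of its values over a set `R G v` of nodes,
provided thresholds over `R` preserve definability: finitely many thresholds
`j ≤ #{w ∈ R G v | F G w = x}` suffice, since `F` has finite range. -/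
theorem Determined.capAt {α : Type*} {F : ∀ G : LGraph d, Fin G.n → α} (hF : Determined A F)
    (R : ∀ G : LGraph d, Fin G.n → Finset (Fin G.n))
    (hR : ∀ (P : NodeProp d) (j : ℕ), Definable A P → A j →
      Definable A (fun G v => j ≤ ((R G v).filter (P G)).card))
    (k : ℕ) (hk : ∀ j, 1 ≤ j → j ≤ k → A j) :
    Determined A (fun G v => Multiset.capAt k ((R G v).val.map fun w => F G w)) := by
  have hcount : ∀ (G : LGraph d) v x, ((R G v).val.map fun w => F G w).count x =
      ((R G v).filter fun w => F G w = x).card := by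
    intro G v x
    rw [Multiset.count_map, Finset.card_def, Finset.filter_val]
    simp only [eq_comm]
  refine ⟨Set.image2 (fun x j G v => j ≤ ((R G v).filter fun w => F G w = x).card)
    {x | ∃ G v, F G v = x} (Set.Icc 1 k), hF.finite_range.image2 _ (Set.finite_Icc 1 k), ?_, ?_⟩
  · rintro _ ⟨x, _, j, hj, rfl⟩
    exact hR _ j (hF.definable fun y => y = x) (hk j hj.1 hj.2)
  · intro G v G' v' h
    apply capAt_eq_of_thresholds
    intro x j h1 hjk
    rw [hcount, hcount]
    by_cases hx : ∃ (G : LGraph d) (v : Fin G.n), F G v = x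
    · exact h _ ⟨x, hx, j, ⟨h1, hjk⟩, rfl⟩
    · push Not at hx
      simp [hx]

/-- The labels computed by a bounded AC+ network are determined by finitely many definable
properties, provided the counting indices up to all the bounds are available. -/
theorem determined_labelAt (N : GNN d) (hkind : N.kind = GNNKind.ACP)
    (hb : ∀ (ℓ : ℕ) (h : ℓ < N.L),
      (∃ k, KBounded k (N.layer ℓ h).agg ∧ ∀ j, 1 ≤ j → j ≤ k → A j) ∧
      (∃ k, KBounded k (N.layer ℓ h).aux ∧ ∀ j, 1 ≤ j → j ≤ k → A j)) (ℓ : ℕ) :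
    Determined A (fun G v => N.labelAt G ℓ v) := by
  induction ℓ with
  | zero =>
    refine ⟨Set.range fun (p : Fin d) (G : LGraph d) v => G.label v p = true,
      Set.finite_range _, ?_, fun G v G' v' h => ?_⟩
    · rintro _ ⟨p, rfl⟩
      exact definable_label p
    · funext i
      have := h _ ⟨Fin.cast N.dims_zero i, rfl⟩
      simp only [GNN.labelAt, this]
  | succ ℓ ih =>
    by_cases hℓ : ℓ < N.L
    · obtain ⟨⟨k₁, hk₁, hA₁⟩, k₂, hk₂, hA₂⟩ := hb ℓ hℓ
      have hagg := ih.capAt (fun G v => G.nbrs v) (fun P j hP hj => hP.threshold_nbrs hj) k₁ hA₁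
      have haux := ih.capAt (fun G v => G.conbrs v) (fun P j hP hj => hP.threshold_conbrs hj)
        k₂ hA₂
      have := ih.combine hagg haux fun x M₁ M₂ =>
        (N.layer ℓ hℓ).comb x ((N.layer ℓ hℓ).agg M₁) ((N.layer ℓ hℓ).aux M₂)
      simp only [GNN.labelAt, dif_pos hℓ, GNN.auxSet, hkind]
      simp only [← hk₁ _, ← hk₂ _] at this
      exact this
    · refine ⟨∅, Set.finite_empty, fun P hP => hP.elim, fun G v G' v' _ => ?_⟩
      simp only [GNN.labelAt, dif_neg hℓ]

theorem exists_formula_of_gnn (N : GNN d) (hkind : N.kind = GNNKind.ACP)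
    (hb : ∀ (ℓ : ℕ) (h : ℓ < N.L),
      (∃ k, KBounded k (N.layer ℓ h).agg ∧ ∀ j, 1 ≤ j → j ≤ k → A j) ∧
      (∃ k, KBounded k (N.layer ℓ h).aux ∧ ∀ j, 1 ≤ j → j ≤ k → A j)) :
    ∃ φ : C2Form d, Graded A φ ∧ φ.free ⊆ {false} ∧ ∀ (G : LGraph d) (v : Fin G.n),
      N.eval G v = true ↔ (LGraph.toFOModel G).sat (fun _ => v) φ := by
  obtain ⟨φ, h1, h2, h3⟩ :=
    (determined_labelAt N hkind hb N.L).definable (fun x => N.cls x = true) false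
  exact ⟨φ, h1, h2, fun G v => (h3 G fun _ => v).symm⟩

/-! ### The canonical network -/

open Cardinal in
theorem exists_encode (n : ℕ) :
    ∃ f : Multiset (Fin n → ℝ) → (Fin 1 → ℝ), Function.Injective f := by
  have h : #(Multiset (Fin n → ℝ)) ≤ #(Fin 1 → ℝ) := by
    have h1 : #(Fin 1 → ℝ) = 𝔠 := by simp [Cardinal.mk_real]
    have h2 : #(Multiset (Fin n → ℝ)) ≤ #(List (Fin n → ℝ)) := Cardinal.mk_quotient_le
    have h3 : #(Fin n → ℝ) ≤ 𝔠 := by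
      simp only [mk_pi, mk_real, prod_const, lift_id, mk_fin]
      exact power_nat_le aleph0_le_continuum
    rw [h1]
    exact h2.trans ((Cardinal.mk_list_le_max _).trans (max_le aleph0_le_continuum h3))
  obtain ⟨f⟩ := h
  exact ⟨f, f.injective⟩

/-- An injective encoding of multisets of real vectors as a single real number. It exists
because there are at most continuum many such multisets. -/
noncomputable def encode (n : ℕ) : Multiset (Fin n → ℝ) → (Fin 1 → ℝ) := (exists_encode n).choose

theorem encode_injective (n : ℕ) : Function.Injective (encode n) := (exists_encode n).choose_spec

open Cardinal in
theorem exists_pack (n : ℕ) :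
    ∃ f : (Fin n → ℝ) × (Fin 1 → ℝ) × (Fin 1 → ℝ) → (Fin 1 → ℝ), Function.Injective f := by
  have h : #((Fin n → ℝ) × (Fin 1 → ℝ) × (Fin 1 → ℝ)) ≤ #(Fin 1 → ℝ) := by
    have h1 : #(Fin 1 → ℝ) = 𝔠 := by simp [Cardinal.mk_real]
    have h3 : #(Fin n → ℝ) ≤ 𝔠 := by
      simp only [mk_pi, mk_real, prod_const, lift_id, mk_fin]
      exact power_nat_le aleph0_le_continuum
    rw [mk_prod, mk_prod, h1]
    simp only [lift_id, continuum_mul_self]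
    exact (mul_le_mul_left h3 _).trans continuum_mul_self.le
  obtain ⟨f⟩ := h
  exact ⟨f, f.injective⟩

/-- An injective packing of a label and two encoded multisets into one real number. -/
noncomputable def pack (n : ℕ) : (Fin n → ℝ) × (Fin 1 → ℝ) × (Fin 1 → ℝ) → (Fin 1 → ℝ) :=
  (exists_pack n).choose

theorem pack_injective (n : ℕ) : Function.Injective (pack n) := (exists_pack n).choose_spec

/-- The dimensions of the canonical network: `d` at the input, `1` afterwards. -/
def canonDims (d : ℕ) : ℕ → ℕ
  | 0 => d
  | _ + 1 => 1

/-- The canonical `k`-bounded AC+ network with `L` layers: each layer remembers, injectively,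
the old label and the `k`-capped multisets of labels of neighbours and of non-neighbours. -/
noncomputable def canonGNN (d k L : ℕ) (cls : (Fin (canonDims d L) → ℝ) → Bool) : GNN d where
  kind := GNNKind.ACP
  L := L
  dims := canonDims d
  dims_zero := rfl
  layer _ _ :=
    { m₁ := 1
      m₂ := 1
      agg := fun M => encode _ (M.capAt k)
      aux := fun M => encode _ (M.capAt k)
      comb := fun x y z => pack _ (x, y, z) }
  cls := cls

theorem canonGNN_bounded (k L : ℕ) (cls : (Fin (canonDims d L) → ℝ) → Bool) (ℓ : ℕ)
    (h : ℓ < (canonGNN d k L cls).L) :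
    KBounded k ((canonGNN d k L cls).layer ℓ h).agg ∧
      KBounded k ((canonGNN d k L cls).layer ℓ h).aux := by
  constructor <;> intro M
  · change encode _ (M.capAt k) = encode _ ((M.capAt k).capAt k)
    rw [capAt_capAt]
  · change encode _ (M.capAt k) = encode _ ((M.capAt k).capAt k)
    rw [capAt_capAt]

/-- The labels of the canonical network (they do not depend on its classification function). -/
noncomputable def color (k L : ℕ) (G : LGraph d) (ℓ : ℕ) (v : Fin G.n) : Fin (canonDims d ℓ) → ℝ :=
  (canonGNN d k L fun _ => true).labelAt G ℓ v

theorem labelAt_canonGNN (k L : ℕ) (cls : (Fin (canonDims d L) → ℝ) → Bool) (G : LGraph d)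
    (ℓ : ℕ) : (canonGNN d k L cls).labelAt G ℓ = color k L G ℓ := by
  induction ℓ with
  | zero => rfl
  | succ ℓ ih =>
    funext v
    unfold color at ih ⊢
    rw [GNN.labelAt, GNN.labelAt, ih]
    rfl

theorem color_succ {k L : ℕ} {G G' : LGraph d} {ℓ : ℕ} (hℓ : ℓ < L) {v : Fin G.n}
    {v' : Fin G'.n} (h : color k L G (ℓ + 1) v = color k L G' (ℓ + 1) v') :
    color k L G ℓ v = color k L G' ℓ v' ∧
    Multiset.capAt k ((G.nbrs v).val.map (color k L G ℓ)) =
      Multiset.capAt k ((G'.nbrs v').val.map (color k L G' ℓ)) ∧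
    Multiset.capAt k ((G.conbrs v).val.map (color k L G ℓ)) =
      Multiset.capAt k ((G'.conbrs v').val.map (color k L G' ℓ)) := by
  have hs : ∀ (G : LGraph d) (v : Fin G.n), color k L G (ℓ + 1) v = pack _ (color k L G ℓ v,
      encode _ (Multiset.capAt k ((G.nbrs v).val.map (color k L G ℓ))),
      encode _ (Multiset.capAt k ((G.conbrs v).val.map (color k L G ℓ)))) := by
    intro G v
    have hℓ' : ℓ < (canonGNN d k L fun _ => true).L := hℓ
    exact dif_pos hℓ'
  rw [hs, hs] at h
  have := pack_injective _ h
  simp only [Prod.mk.injEq] at this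
  exact ⟨this.1, encode_injective _ this.2.1, encode_injective _ this.2.2⟩

theorem label_eq_of_color {k L : ℕ} {G G' : LGraph d} {ℓ : ℕ} (hℓ : ℓ ≤ L) {v : Fin G.n}
    {v' : Fin G'.n} (h : color k L G ℓ v = color k L G' ℓ v') (p : Fin d) :
    G.label v p = G'.label v' p := by
  induction ℓ with
  | zero =>
    have := congrFun h p
    simp only [color, GNN.labelAt] at this
    change (if G.label v p = true then (1 : ℝ) else 0) =
      if G'.label v' p = true then (1 : ℝ) else 0 at this
    cases h1 : G.label v p <;> cases h2 : G'.label v' p <;> simp_all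
  | succ ℓ ih => exact ih (by omega) (color_succ (by omega) h).1

/-! ### Formulas cannot distinguish equal colours -/

/-- Two assignments have the same colours at level `ℓ` and satisfy the same equalities and
adjacencies. -/
structure Similar (k L ℓ : ℕ) (G G' : LGraph d) (a : Bool → Fin G.n) (a' : Bool → Fin G'.n) :
    Prop where
  color_eq : ∀ b, color k L G ℓ (a b) = color k L G' ℓ (a' b)
  eq_iff : ∀ b c, a b = a c ↔ a' b = a' c
  adj_iff : ∀ b c, G.adj (a b) (a c) ↔ G'.adj (a' b) (a' c)

theorem Similar.symm {k L ℓ : ℕ} {G G' : LGraph d} {a : Bool → Fin G.n} {a' : Bool → Fin G'.n}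
    (h : Similar k L ℓ G G' a a') : Similar k L ℓ G' G a' a :=
  ⟨fun b => (h.1 b).symm, fun b c => (h.2 b c).symm, fun b c => (h.3 b c).symm⟩

theorem similar_update {k L ℓ : ℕ} {G G' : LGraph d} {a : Bool → Fin G.n}
    {a' : Bool → Fin G'.n} {b : Bool} {w : Fin G.n} {w' : Fin G'.n}
    (h0 : color k L G ℓ (a !b) = color k L G' ℓ (a' !b))
    (h1 : color k L G ℓ w = color k L G' ℓ w')
    (h2 : w = a (!b) ↔ w' = a' (!b))
    (h3 : G.adj (a !b) w ↔ G'.adj (a' !b) w') :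
    Similar k L ℓ G G' (Function.update a b w) (Function.update a' b w') := by
  have h3' : G.adj w (a !b) ↔ G'.adj w' (a' !b) :=
    ⟨fun h => G'.symm _ _ (h3.1 (G.symm _ _ h)), fun h => G.symm _ _ (h3.2 (G'.symm _ _ h))⟩
  have i1 := G.irrefl
  have i2 := G'.irrefl
  have e1 : a (!b) = w ↔ a' (!b) = w' := by rw [eq_comm, h2, eq_comm]
  constructor
  · intro c
    cases b <;> cases c <;> simp_all [Function.update]
  · intro c c'
    cases b <;> cases c <;> cases c' <;> simp_all [Function.update]
  · intro c c'
    cases b <;> cases c <;> cases c' <;> simp_all [Function.update]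

/-- The nodes split into `c` itself, its neighbours and its non-neighbours. -/
theorem card_split (G : LGraph d) (c : Fin G.n) (X : Fin G.n → Prop) :
    Nat.card {w // X w} = (if X c then 1 else 0) + ((G.nbrs c).filter X).card +
      ((G.conbrs c).filter X).card := by
  rw [Nat.card_eq_fintype_card, Fintype.card_subtype]
  have h1 : (if X c then 1 else 0) = (({c} : Finset (Fin G.n)).filter X).card := by
    rw [Finset.filter_singleton]
    split_ifs <;> rfl
  have irr := G.irrefl c
  rw [h1, ← Finset.card_union_of_disjoint, ← Finset.card_union_of_disjoint]
  · congr 1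
    ext w
    simp only [LGraph.nbrs, LGraph.conbrs, Finset.mem_filter, Finset.mem_univ, Finset.mem_union,
      Finset.mem_singleton, true_and]
    tauto
  · rw [Finset.disjoint_left]
    intro w
    simp only [LGraph.nbrs, LGraph.conbrs, Finset.mem_filter, Finset.mem_univ, Finset.mem_union,
      Finset.mem_singleton, true_and]
    tauto
  · rw [Finset.disjoint_left]
    intro w
    simp only [LGraph.nbrs, Finset.mem_filter, Finset.mem_univ, Finset.mem_singleton, true_and]
    rintro ⟨rfl, _⟩
    tauto

/-- If the capped colour multisets over `R` and `R'` agree, and membership in `X` and `X'`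
is governed by the colour, uniformly in both graphs, then `X` and `X'` have the same number of
elements in `R` and `R'` up to `k`. -/
theorem min_card_eq {α β γ : Type*} (k : ℕ) (R : Finset α) (R' : Finset β) (f : α → γ)
    (f' : β → γ) (X : α → Prop) (X' : β → Prop)
    (hcap : Multiset.capAt k (R.val.map f) = Multiset.capAt k (R'.val.map f'))
    (h11 : ∀ u ∈ R, ∀ w ∈ R, f u = f w → (X u ↔ X w))
    (h12 : ∀ u ∈ R, ∀ w ∈ R', f u = f' w → (X u ↔ X' w))
    (h22 : ∀ u ∈ R', ∀ w ∈ R', f' u = f' w → (X' u ↔ X' w)) :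
    min (R.filter X).card k = min (R'.filter X').card k := by
  obtain ⟨P, hP⟩ : ∃ P : γ → Prop, ∀ x, P x ↔
      (∃ u ∈ R, f u = x ∧ X u) ∨ ∃ u ∈ R', f' u = x ∧ X' u := ⟨_, fun _ => Iff.rfl⟩
  have e1 : (R.filter X).card = (R.val.map f).countP P := by
    rw [Multiset.countP_map, Finset.card_def, Finset.filter_val]
    congr 1
    apply Multiset.filter_congr
    intro u hu
    rw [hP]
    constructor
    · exact fun hx => Or.inl ⟨u, hu, rfl, hx⟩
    · rintro (⟨w, hw, he, hx⟩ | ⟨w, hw, he, hx⟩)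
      · exact (h11 w hw u hu he).1 hx
      · exact (h12 u hu w hw he.symm).2 hx
  have e2 : (R'.filter X').card = (R'.val.map f').countP P := by
    rw [Multiset.countP_map, Finset.card_def, Finset.filter_val]
    congr 1
    apply Multiset.filter_congr
    intro u hu
    rw [hP]
    constructor
    · exact fun hx => Or.inr ⟨u, hu, rfl, hx⟩
    · rintro (⟨w, hw, he, hx⟩ | ⟨w, hw, he, hx⟩)
      · exact (h12 w hw u hu he).1 hx
      · exact (h22 w hw u hu he).1 hx
  rw [e1, e2, ← min_countP_capAt k (R.val.map f), ← min_countP_capAt k (R'.val.map f'), hcap]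

/-- A formula of depth at most `ℓ` and rank at most `k` has the same truth value under similar
assignments at level `ℓ`. In the quantifier case the witnesses are counted separately among the
fixed node, its neighbours and its non-neighbours, where by induction only the colour of the
witness matters. -/
theorem sat_iff_of_similar {k L : ℕ} (φ : C2Form d) : ∀ {ℓ : ℕ}, φ.rank ≤ k → φ.depth ≤ ℓ →
    ℓ ≤ L → ∀ {G G' : LGraph d} {a : Bool → Fin G.n} {a' : Bool → Fin G'.n},
    Similar k L ℓ G G' a a' → (G.toFOModel.sat a φ ↔ G'.toFOModel.sat a' φ) := by
  induction φ with
  | prop p b =>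
    intro ℓ _ _ hL G G' a a' h
    simp only [FOModel.sat, LGraph.toFOModel]
    rw [label_eq_of_color hL (h.color_eq b) p]
  | edge b c =>
    intro ℓ _ _ hL G G' a a' h
    exact h.adj_iff b c
  | eq b c =>
    intro ℓ _ _ hL G G' a a' h
    exact h.eq_iff b c
  | neg φ ih =>
    intro ℓ hr hd hL G G' a a' h
    exact not_congr (ih hr hd hL h)
  | and φ ψ ih₁ ih₂ =>
    intro ℓ hr hd hL G G' a a' h
    simp only [C2Form.rank, C2Form.depth, max_le_iff] at hr hd
    exact and_congr (ih₁ hr.1 hd.1 hL h) (ih₂ hr.2 hd.2 hL h)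
  | exC j b φ ih =>
    intro ℓ hr hd hL G G' a a' h
    simp only [C2Form.rank, C2Form.depth, max_le_iff] at hr hd
    obtain ⟨ℓ, rfl⟩ : ∃ m, ℓ = m + 1 := ⟨ℓ - 1, by omega⟩
    obtain ⟨hc, hn, hco⟩ := color_succ (by omega) (h.color_eq !b)
    have ih' : ∀ {G₁ G₂ : LGraph d} {a₁ : Bool → Fin G₁.n} {a₂ : Bool → Fin G₂.n},
        Similar k L ℓ G₁ G₂ a₁ a₂ → (G₁.toFOModel.sat a₁ φ ↔ G₂.toFOModel.sat a₂ φ) :=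
      fun h => ih hr.2 (by omega) (by omega) h
    have hself : G.toFOModel.sat (Function.update a b (a !b)) φ ↔
        G'.toFOModel.sat (Function.update a' b (a' !b)) φ :=
      ih' (similar_update hc hc (by simp) (by simp [G.irrefl, G'.irrefl]))
    have nb : ∀ {G₁ G₂ : LGraph d} {a₁ : Bool → Fin G₁.n} {a₂ : Bool → Fin G₂.n},
        color k L G₁ ℓ (a₁ !b) = color k L G₂ ℓ (a₂ !b) → ∀ u ∈ G₁.nbrs (a₁ !b),
        ∀ w ∈ G₂.nbrs (a₂ !b), color k L G₁ ℓ u = color k L G₂ ℓ w →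
        (G₁.toFOModel.sat (Function.update a₁ b u) φ ↔
          G₂.toFOModel.sat (Function.update a₂ b w) φ) := by
      intro G₁ G₂ a₁ a₂ h0 u hu w hw hcol
      simp only [LGraph.nbrs, Finset.mem_filter, Finset.mem_univ, true_and] at hu hw
      refine ih' (similar_update h0 hcol (iff_of_false ?_ ?_) (iff_of_true hu hw))
      · rintro rfl
        exact G₁.irrefl _ hu
      · rintro rfl
        exact G₂.irrefl _ hw
    have cb : ∀ {G₁ G₂ : LGraph d} {a₁ : Bool → Fin G₁.n} {a₂ : Bool → Fin G₂.n},
        color k L G₁ ℓ (a₁ !b) = color k L G₂ ℓ (a₂ !b) → ∀ u ∈ G₁.conbrs (a₁ !b),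
        ∀ w ∈ G₂.conbrs (a₂ !b), color k L G₁ ℓ u = color k L G₂ ℓ w →
        (G₁.toFOModel.sat (Function.update a₁ b u) φ ↔
          G₂.toFOModel.sat (Function.update a₂ b w) φ) := by
      intro G₁ G₂ a₁ a₂ h0 u hu w hw hcol
      simp only [LGraph.conbrs, Finset.mem_filter, Finset.mem_univ, true_and] at hu hw
      exact ih' (similar_update h0 hcol (iff_of_false hu.2 hw.2) (iff_of_false hu.1 hw.1))
    have m1 := min_card_eq k (G.nbrs (a !b)) (G'.nbrs (a' !b)) (color k L G ℓ) (color k L G' ℓ)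
      (fun w => G.toFOModel.sat (Function.update a b w) φ)
      (fun w => G'.toFOModel.sat (Function.update a' b w) φ) hn (nb rfl) (nb hc) (nb rfl)
    have m2 := min_card_eq k (G.conbrs (a !b)) (G'.conbrs (a' !b)) (color k L G ℓ)
      (color k L G' ℓ)
      (fun w => G.toFOModel.sat (Function.update a b w) φ)
      (fun w => G'.toFOModel.sat (Function.update a' b w) φ) hco (cb rfl) (cb hc) (cb rfl)
    have s1 := card_split G (a !b) (fun w => G.toFOModel.sat (Function.update a b w) φ)
    have s2 := card_split G' (a' !b) (fun w => G'.toFOModel.sat (Function.update a' b w) φ)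
    have s0 : (if G.toFOModel.sat (Function.update a b (a !b)) φ then 1 else 0) =
        (if G'.toFOModel.sat (Function.update a' b (a' !b)) φ then 1 else 0) := by
      simp only [hself]
    change j ≤ Nat.card {w : Fin G.n // G.toFOModel.sat (Function.update a b w) φ} ↔
      j ≤ Nat.card {w : Fin G'.n // G'.toFOModel.sat (Function.update a' b w) φ}
    have hjk := hr.1
    rw [s1, s2, s0]
    omega

theorem exists_gnn_of_formula (φ : C2Form d) (k : ℕ) (hk : φ.rank ≤ k) :
    ∃ N : GNN d, N.kind = GNNKind.ACP ∧
      (∀ (ℓ : ℕ) (h : ℓ < N.L), KBounded k (N.layer ℓ h).agg ∧ KBounded k (N.layer ℓ h).aux) ∧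
      ∀ (G : LGraph d) (v : Fin G.n),
        N.eval G v = true ↔ (LGraph.toFOModel G).sat (fun _ => v) φ := by
  refine ⟨canonGNN d k φ.depth fun x => decide (∃ (G : LGraph d) (v : Fin G.n),
    color k φ.depth G φ.depth v = x ∧ G.toFOModel.sat (fun _ => v) φ), rfl,
    canonGNN_bounded _ _ _, fun G v => ?_⟩
  unfold GNN.eval
  rw [labelAt_canonGNN]
  change decide (∃ (G' : LGraph d) (v' : Fin G'.n), color k φ.depth G' φ.depth v' =
    color k φ.depth G φ.depth v ∧ G'.toFOModel.sat (fun _ => v') φ) = true ↔ _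
  rw [decide_eq_true_iff]
  constructor
  · rintro ⟨G', v', hcol, hs⟩
    refine (sat_iff_of_similar φ hk le_rfl le_rfl ⟨fun _ => hcol, ?_, ?_⟩).1 hs
    · simp
    · simp [G.irrefl, G'.irrefl]
  · exact fun hs => ⟨G, v, rfl, hs⟩

theorem rank_le_one_of_isFO2 (φ : C2Form d) (h : φ.IsFO2) : φ.rank ≤ 1 := by
  induction φ with
  | prop | edge | eq => exact Nat.zero_le _
  | neg φ ih => exact ih h
  | and φ ψ ih₁ ih₂ => exact max_le (ih₁ h.1) (ih₂ h.2)
  | exC k b φ ih => exact max_le h.1.le (ih h.2)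

end ACPlus

/-- If `N ∈ GNN_b^AC+`, then `N` is equivalent to a C² classifier; if
`N ∈ GNN_s^AC+`, then `N` is equivalent to an FO² classifier. Consequently (together with the
converse directions), `C² ≡ GNN_b^AC+` and `FO² ≡ GNN_s^AC+`. -/
theorem c2_equiv_gnn_b_acplus_and_fo2_equiv_gnn_s_acplus :
    ∀ d : ℕ,
      (∀ N : GNN d, N.kind = GNNKind.ACP →
        (∀ (ℓ : ℕ) (h : ℓ < N.L),
          BoundedAgg (N.layer ℓ h).agg ∧ BoundedAgg (N.layer ℓ h).aux) →
        ∃ φ : C2Form d, φ.IsC2 ∧ φ.free ⊆ {false} ∧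
          ∀ (G : LGraph d) (v : Fin G.n),
            N.eval G v = true ↔ (LGraph.toFOModel G).sat (fun _ => v) φ) ∧
      (∀ N : GNN d, N.kind = GNNKind.ACP →
        (∀ (ℓ : ℕ) (h : ℓ < N.L),
          KBounded 1 (N.layer ℓ h).agg ∧ KBounded 1 (N.layer ℓ h).aux) →
        ∃ φ : C2Form d, φ.IsFO2 ∧ φ.free ⊆ {false} ∧
          ∀ (G : LGraph d) (v : Fin G.n),
            N.eval G v = true ↔ (LGraph.toFOModel G).sat (fun _ => v) φ) ∧
      (∀ φ : C2Form d, φ.IsC2 → φ.free ⊆ {false} →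
        ∃ N : GNN d, N.kind = GNNKind.ACP ∧
          (∀ (ℓ : ℕ) (h : ℓ < N.L),
            BoundedAgg (N.layer ℓ h).agg ∧ BoundedAgg (N.layer ℓ h).aux) ∧
          ∀ (G : LGraph d) (v : Fin G.n),
            N.eval G v = true ↔ (LGraph.toFOModel G).sat (fun _ => v) φ) ∧
      (∀ φ : C2Form d, φ.IsFO2 → φ.free ⊆ {false} →
        ∃ N : GNN d, N.kind = GNNKind.ACP ∧
          (∀ (ℓ : ℕ) (h : ℓ < N.L),
            KBounded 1 (N.layer ℓ h).agg ∧ KBounded 1 (N.layer ℓ h).aux) ∧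
          ∀ (G : LGraph d) (v : Fin G.n),
            N.eval G v = true ↔ (LGraph.toFOModel G).sat (fun _ => v) φ) := by
  intro d
  refine ⟨fun N hkind hb => ?_, fun N hkind hb => ?_, fun φ _ _ => ?_, fun φ hφ _ => ?_⟩
  · obtain ⟨φ, h1, h2, h3⟩ := ACPlus.exists_formula_of_gnn (A := fun k => 1 ≤ k) N hkind
      fun ℓ h => by
        obtain ⟨⟨k₁, h₁⟩, k₂, h₂⟩ := hb ℓ h
        exact ⟨⟨k₁, h₁, fun j hj _ => hj⟩, k₂, h₂, fun j hj _ => hj⟩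
    exact ⟨φ, ACPlus.isC2_of_graded φ h1, h2, h3⟩
  · obtain ⟨φ, h1, h2, h3⟩ := ACPlus.exists_formula_of_gnn (A := fun k => k = 1) N hkind
      fun ℓ h => ⟨⟨1, (hb ℓ h).1, fun j h1 h2 => le_antisymm h2 h1⟩,
        1, (hb ℓ h).2, fun j h1 h2 => le_antisymm h2 h1⟩
    exact ⟨φ, ACPlus.isFO2_of_graded φ h1, h2, h3⟩
  · obtain ⟨N, h1, h2, h3⟩ := ACPlus.exists_gnn_of_formula φ φ.rank le_rfl
    exact ⟨N, h1, fun ℓ h => ⟨⟨_, (h2 ℓ h).1⟩, ⟨_, (h2 ℓ h).2⟩⟩, h3⟩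
  · exact ACPlus.exists_gnn_of_formula φ 1 (ACPlus.rank_le_one_of_isFO2 φ hφ)
end
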